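/- Let t₁ᴸ, t₁ᴿ, t₂ᴸ, t₂ᴿ satisfy 0 < t₁ᴸ < t₂ᴸ < θ_c < t₂ᴿ < t₁ᴿ < 2π with f(t₁ᴸ) = f(t₁ᴿ) and f(t₂ᴸ) = f(t₂ᴿ), where θ_c is the unique critical point of f in (0, π). Then t₂ᴸ + t₂ᴿ < t₁ᴸ + t₁ᴿ. -/

import Mathlib

open Real Set

noncomputable def f (x : ℝ) : ℝ := Real.sin x * (1 - 1 / (8 * Real.sin (x/2)^3))

/-!
If `F'` is strictly convex, then `t ↦ F' (m + t) + F' (m - t)` is strictly increasing for `t ≥ 0`,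
so the odd part `t ↦ F (m + t) - F (m - t)` of `F` about `m` is strictly convex there. Taking for
`m` the midpoint of a chord `F b = F c`, the odd part vanishes at `0` and at the half-length of the
chord, hence is positive afterwards: for `c < d`, the reflection `b + c - d` of `d` satisfies
`F (b + c - d) < F d`. A chord `F a = F d` with `a ≤ b + c - d` would therefore
contradict the monotonicity of `F` to the left of `b`.

For `f` this applies on `(0, 2π)`: a computation gives `f''' > 0`, and since `f'` is symmetric about
`π` it also vanishes at `2π - θc`, whence `f' > 0` on `(0, θc)` by strict convexity.
-/

theorem strictMonoOn_add_reflection_of_strictConvexOn {𝕜 : Type*} [Field 𝕜] [LinearOrder 𝕜]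
    [IsStrictOrderedRing 𝕜] {g : 𝕜 → 𝕜} {m r : 𝕜}
    (hg : StrictConvexOn 𝕜 (Icc (m - r) (m + r)) g) :
    StrictMonoOn (fun t ↦ g (m + t) + g (m - t)) (Icc 0 r) := by
  rintro s ⟨hs, -⟩ t ⟨-, htr⟩ hst
  have ht : 0 < t := hs.trans_lt hst
  have hmem_add : m + t ∈ Icc (m - r) (m + r) := ⟨by linarith, by linarith⟩
  have hmem_sub : m - t ∈ Icc (m - r) (m + r) := ⟨by linarith, by linarith⟩
  have hne : m + t ≠ m - t := by linarith
  obtain ⟨α, β, hα, hβ, hαβ, hs_eq⟩ : ∃ α β : 𝕜, 0 < α ∧ 0 < β ∧ α + β = 1 ∧ s = α * t - β * t :=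
    ⟨(t + s) / (2 * t), (t - s) / (2 * t), div_pos (by linarith) (by linarith),
      div_pos (by linarith) (by linarith), by field_simp; ring, by field_simp; ring⟩
  have hadd := hg.2 hmem_add hmem_sub hne hα hβ hαβ
  have hsub := hg.2 hmem_sub hmem_add hne.symm hα hβ hαβ
  have hadd_eq : α * (m + t) + β * (m - t) = m + s := by linear_combination m * hαβ - hs_eq
  have hsub_eq : α * (m - t) + β * (m + t) = m - s := by linear_combination m * hαβ + hs_eq
  simp only [smul_eq_mul, hadd_eq, hsub_eq] at hadd hsub
  calc g (m + s) + g (m - s) < (α + β) * (g (m + t) + g (m - t)) := by linarith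
    _ = g (m + t) + g (m - t) := by rw [hαβ, one_mul]

theorem strictConvexOn_sub_reflection_of_strictConvexOn_deriv {F : ℝ → ℝ} {m r : ℝ}
    (hF : ∀ x ∈ Icc (m - r) (m + r), DifferentiableAt ℝ F x)
    (hF' : StrictConvexOn ℝ (Icc (m - r) (m + r)) (deriv F)) :
    StrictConvexOn ℝ (Icc 0 r) (fun t ↦ F (m + t) - F (m - t)) := by
  have hderiv : ∀ t ∈ Icc 0 r,
      HasDerivAt (fun t ↦ F (m + t) - F (m - t)) (deriv F (m + t) + deriv F (m - t)) t := by
    rintro t ⟨ht, htr⟩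
    have hadd := (hF (m + t) ⟨by linarith, by linarith⟩).hasDerivAt.comp_const_add m t
    have hsub := (hF (m - t) ⟨by linarith, by linarith⟩).hasDerivAt.comp_const_sub m t
    exact (hadd.sub hsub).congr_deriv (sub_neg_eq_add _ _)
  refine StrictMonoOn.strictConvexOn_of_deriv (convex_Icc 0 r)
    (fun t ht ↦ (hderiv t ht).continuousAt.continuousWithinAt) ?_
  exact ((strictMonoOn_add_reflection_of_strictConvexOn hF').mono interior_subset).congr
    fun t ht ↦ (hderiv t (interior_subset ht)).deriv.symm

theorem map_add_sub_lt_of_strictConvexOn_deriv {F : ℝ → ℝ} {b c d : ℝ}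
    (hF : ∀ x ∈ Icc (b + c - d) d, DifferentiableAt ℝ F x)
    (hF' : StrictConvexOn ℝ (Icc (b + c - d) d) (deriv F))
    (hbc : b < c) (hcd : c < d) (hFbc : F b = F c) : F (b + c - d) < F d := by
  obtain ⟨m, hm⟩ : ∃ m, m = (b + c) / 2 := ⟨_, rfl⟩
  have hleft : b + c - d = m - (d - m) := by linarith
  have hright : d = m + (d - m) := by ring
  have hconv : StrictConvexOn ℝ (Icc 0 (d - m)) (fun t ↦ F (m + t) - F (m - t)) :=
    strictConvexOn_sub_reflection_of_strictConvexOn_deriv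
      (by rwa [← hleft, ← hright]) (by rwa [← hleft, ← hright])
  have hmem : c - m ∈ openSegment ℝ 0 (d - m) := by
    rw [openSegment_eq_Ioo (by linarith)]
    exact ⟨by linarith, by linarith⟩
  have h := hconv.lt_on_openSegment (left_mem_Icc.2 (by linarith)) (right_mem_Icc.2 (by linarith))
    (by linarith) hmem
  have hc : F (m + (c - m)) - F (m - (c - m)) = 0 := by
    rw [add_sub_cancel, show m - (c - m) = b by linarith, hFbc, sub_self]
  simpa only [hc, add_zero, sub_zero, sub_self, ← hleft, ← hright, lt_max_iff, lt_irrefl, false_or,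
    sub_pos] using h

theorem add_lt_add_of_strictConvexOn_deriv {F : ℝ → ℝ} {S : Set ℝ} {a b c d : ℝ}
    (hF : ∀ x ∈ S, DifferentiableAt ℝ F x) (hF' : StrictConvexOn ℝ S (deriv F))
    (ha : a ∈ S) (hd : d ∈ S) (hbc : b < c) (hcd : c < d) (hmono : MonotoneOn F (Icc a b))
    (had : F a = F d) (hFbc : F b = F c) : b + c < a + d := by
  by_contra! hle
  have hsub : Icc (b + c - d) d ⊆ S :=
    (Icc_subset_Icc_left (by linarith)).trans (hF'.1.ordConnected.out ha hd)
  have hlt : F (b + c - d) < F d :=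
    map_add_sub_lt_of_strictConvexOn_deriv (fun x hx ↦ hF x (hsub hx))
      (hF'.subset hsub (convex_Icc _ _)) hbc hcd hFbc
  have hge : F a ≤ F (b + c - d) :=
    hmono (left_mem_Icc.2 (by linarith)) ⟨by linarith, by linarith⟩ (by linarith)
  exact hlt.not_ge (had ▸ hge)

theorem strictConvexOn_of_hasDerivAt2_pos {D : Set ℝ} (hD : Convex ℝ D) {F F' F'' : ℝ → ℝ}
    (hF : ContinuousOn F D) (hF' : ∀ x ∈ interior D, HasDerivAt F (F' x) x)
    (hF'' : ∀ x ∈ interior D, HasDerivAt F' (F'' x) x) (hpos : ∀ x ∈ interior D, 0 < F'' x) :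
    StrictConvexOn ℝ D F := by
  refine strictConvexOn_of_deriv2_pos hD hF fun x hx ↦ ?_
  have heq : deriv F =ᶠ[nhds x] F' :=
    Filter.eventuallyEq_of_mem (isOpen_interior.mem_nhds hx) fun y hy ↦ (hF' y hy).deriv
  simpa [heq.deriv_eq, (hF'' x hx).deriv] using hpos x hx

theorem sin_half_pos {x : ℝ} (hx : x ∈ Ioo 0 (2 * π)) : 0 < sin (x / 2) :=
  sin_pos_of_pos_of_lt_pi (by linarith [hx.1]) (by linarith [hx.2])

theorem sin_eq_two_mul_sin_half_mul_cos_half (x : ℝ) : sin x = 2 * sin (x / 2) * cos (x / 2) := by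
  rw [← sin_two_mul, mul_div_cancel₀ x two_ne_zero]

theorem hasDerivAt_sin_half (x : ℝ) : HasDerivAt (fun x ↦ sin (x / 2)) (cos (x / 2) / 2) x :=
  ((hasDerivAt_id' x).div_const 2).sin.congr_deriv (mul_one_div _ _)

theorem hasDerivAt_cos_half (x : ℝ) : HasDerivAt (fun x ↦ cos (x / 2)) (-sin (x / 2) / 2) x :=
  ((hasDerivAt_id' x).div_const 2).cos.congr_deriv (mul_one_div _ _)

theorem hasDerivAt_inv_sin_half_pow (n : ℕ) {x : ℝ} (hx : sin (x / 2) ≠ 0) :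
    HasDerivAt (fun x ↦ (sin (x / 2) ^ n)⁻¹)
      (-(n * cos (x / 2)) / (2 * sin (x / 2) ^ (n + 1))) x := by
  refine (((hasDerivAt_sin_half x).fun_pow n).fun_inv (pow_ne_zero n hx)).congr_deriv ?_
  cases n with
  | zero => simp
  | succ n =>
    rw [Nat.add_sub_cancel]
    field_simp
    ring

theorem hasDerivAt_cos_half_div_sin_half_pow (n : ℕ) {x : ℝ} (hx : sin (x / 2) ≠ 0) :
    HasDerivAt (fun x ↦ cos (x / 2) / sin (x / 2) ^ n)
      (((n - 1) * sin (x / 2) ^ 2 - n) / (2 * sin (x / 2) ^ (n + 1))) x := by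
  have h := (hasDerivAt_cos_half x).fun_mul (hasDerivAt_inv_sin_half_pow n hx)
  simp only [← div_eq_mul_inv] at h
  refine h.congr_deriv ?_
  have hcos : cos (x / 2) ^ 2 = 1 - sin (x / 2) ^ 2 := cos_sq' _
  field_simp
  rw [hcos]
  ring

/-- The derivative of `f` on `(0, 2π)`. -/
noncomputable def fDeriv (x : ℝ) : ℝ :=
  cos x + (sin (x / 2) ^ 3)⁻¹ / 4 - (sin (x / 2) ^ 1)⁻¹ / 8

/-- The second derivative of `f` on `(0, 2π)`. -/
noncomputable def fDeriv₂ (x : ℝ) : ℝ :=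
  -sin x - 3 / 8 * (cos (x / 2) / sin (x / 2) ^ 4) + cos (x / 2) / sin (x / 2) ^ 2 / 16

/-- The third derivative of `f` on `(0, 2π)`. -/
noncomputable def fDeriv₃ (x : ℝ) : ℝ :=
  -cos x + (24 - 20 * sin (x / 2) ^ 2 + sin (x / 2) ^ 4) / (32 * sin (x / 2) ^ 5)

-- This includes the zeros of `sin (x / 2)`, where division by zero makes both sides vanish.
theorem f_eq_sin_sub (x : ℝ) : f x = sin x - cos (x / 2) / sin (x / 2) ^ 2 / 4 := by
  rw [f, sin_eq_two_mul_sin_half_mul_cos_half]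
  rcases eq_or_ne (sin (x / 2)) 0 with h | h
  · simp [h]
  · field_simp
    ring

theorem f_two_pi_sub (x : ℝ) : f (2 * π - x) = -f x := by
  have h : (2 * π - x) / 2 = π - x / 2 := by ring
  rw [f, f, h, sin_pi_sub, sin_two_pi_sub, neg_mul]

theorem deriv_f_two_pi_sub (x : ℝ) : deriv f (2 * π - x) = deriv f x := by
  have h : deriv (fun y ↦ f (2 * π - y)) x = deriv (fun y ↦ -f y) x := by simp only [f_two_pi_sub]
  rwa [deriv_comp_const_sub, deriv.fun_neg, neg_inj] at h

theorem hasDerivAt_f {x : ℝ} (hx : sin (x / 2) ≠ 0) : HasDerivAt f (fDeriv x) x := by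
  rw [funext f_eq_sin_sub]
  refine ((hasDerivAt_sin x).fun_sub
    ((hasDerivAt_cos_half_div_sin_half_pow 2 hx).div_const 4)).congr_deriv ?_
  simp only [fDeriv]
  field_simp
  ring

theorem hasDerivAt_fDeriv {x : ℝ} (hx : sin (x / 2) ≠ 0) : HasDerivAt fDeriv (fDeriv₂ x) x := by
  refine (((hasDerivAt_cos x).fun_add ((hasDerivAt_inv_sin_half_pow 3 hx).div_const 4)).fun_sub
    ((hasDerivAt_inv_sin_half_pow 1 hx).div_const 8)).congr_deriv ?_
  simp only [fDeriv₂]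
  field_simp
  ring

theorem hasDerivAt_fDeriv₂ {x : ℝ} (hx : sin (x / 2) ≠ 0) : HasDerivAt fDeriv₂ (fDeriv₃ x) x := by
  refine (((hasDerivAt_sin x).fun_neg.fun_sub
    ((hasDerivAt_cos_half_div_sin_half_pow 4 hx).const_mul (3 / 8))).fun_add
    ((hasDerivAt_cos_half_div_sin_half_pow 2 hx).div_const 16)).congr_deriv ?_
  simp only [fDeriv₃]
  field_simp
  ring

theorem fDeriv₃_pos {x : ℝ} (hx : 0 < sin (x / 2)) : 0 < fDeriv₃ x := by
  have hcos : cos x = 1 - 2 * sin (x / 2) ^ 2 := by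
    rw [← cos_two_mul_eq_one_sub, mul_div_cancel₀ x two_ne_zero]
  have hle := sin_le_one (x / 2)
  rw [fDeriv₃, hcos]
  generalize sin (x / 2) = s at hx hle
  have hsq : s ^ 2 ≤ 1 := pow_le_one₀ hx.le hle
  -- AM-GM for `s ^ 2`, `s ^ 2` and `1 - 2 * s ^ 2`
  have hamgm : s ^ 4 * (1 - 2 * s ^ 2) ≤ 1 / 27 := by
    have : 0 ≤ (3 * s ^ 2 - 1) ^ 2 * (6 * s ^ 2 + 1) := by positivity
    linarith
  have hlt : (1 - 2 * s ^ 2) * (32 * s ^ 5) < 24 - 20 * s ^ 2 + s ^ 4 := by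
    calc (1 - 2 * s ^ 2) * (32 * s ^ 5) = 32 * s * (s ^ 4 * (1 - 2 * s ^ 2)) := by ring
      _ ≤ 32 * s * (1 / 27) := by gcongr
      _ < 24 - 20 * s ^ 2 + s ^ 4 := by linarith [pow_pos hx 4]
  linarith [(lt_div_iff₀ (by positivity)).2 hlt]

theorem differentiableAt_f {x : ℝ} (hx : x ∈ Ioo 0 (2 * π)) : DifferentiableAt ℝ f x :=
  (hasDerivAt_f (sin_half_pos hx).ne').differentiableAt

theorem strictConvexOn_deriv_f : StrictConvexOn ℝ (Ioo 0 (2 * π)) (deriv f) := by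
  have hne : ∀ x ∈ Ioo 0 (2 * π), sin (x / 2) ≠ 0 := fun x hx ↦ (sin_half_pos hx).ne'
  have hconv : StrictConvexOn ℝ (Ioo 0 (2 * π)) fDeriv := by
    refine strictConvexOn_of_hasDerivAt2_pos (convex_Ioo _ _)
      (fun x hx ↦ (hasDerivAt_fDeriv (hne x hx)).continuousAt.continuousWithinAt)
      (F' := fDeriv₂) (F'' := fDeriv₃) ?_ ?_ ?_ <;> rw [interior_Ioo]
    · exact fun x hx ↦ hasDerivAt_fDeriv (hne x hx)
    · exact fun x hx ↦ hasDerivAt_fDeriv₂ (hne x hx)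
    · exact fun x hx ↦ fDeriv₃_pos (sin_half_pos hx)
  exact hconv.congr fun x hx ↦ (hasDerivAt_f (hne x hx)).deriv.symm

theorem deriv_f_pos_of_lt_critical {θ x : ℝ} (hθ : θ < π) (hcrit : deriv f θ = 0)
    (hx : 0 < x) (hxθ : x < θ) : 0 < deriv f x := by
  have hcrit' : deriv f (2 * π - θ) = 0 := (deriv_f_two_pi_sub θ).trans hcrit
  have hmem : θ ∈ openSegment ℝ x (2 * π - θ) := by
    rw [openSegment_eq_Ioo (by linarith)]
    exact ⟨hxθ, by linarith⟩
  have h := strictConvexOn_deriv_f.lt_on_openSegment ⟨hx, by linarith⟩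
    ⟨by linarith, by linarith⟩ (by linarith) hmem
  simpa only [hcrit, hcrit', lt_max_iff, lt_irrefl, or_false] using h

theorem strictMonoOn_f_of_critical {θ : ℝ} (hθ : θ < π) (hcrit : deriv f θ = 0) :
    StrictMonoOn f (Ioo 0 θ) := by
  refine strictMonoOn_of_deriv_pos (convex_Ioo 0 θ)
    (fun x hx ↦ (differentiableAt_f ⟨hx.1, ?_⟩).continuousAt.continuousWithinAt) fun x hx ↦ ?_
  · linarith [hx.1, hx.2]
  · rw [interior_Ioo] at hx
    exact deriv_f_pos_of_lt_critical hθ hcrit hx.1 hx.2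

theorem stmt6 (θc t1L t1R t2L t2R : ℝ)
    (hθc : θc ∈ Ioo (0:ℝ) π) (hcrit : deriv f θc = 0)
    (huniq : ∀ x ∈ Ioo (0:ℝ) π, deriv f x = 0 → x = θc)
    (h1 : 0 < t1L) (h2 : t1L < t2L) (h3 : t2L < θc) (h4 : θc < t2R)
    (h5 : t2R < t1R) (h6 : t1R < 2*π)
    (hf1 : f t1L = f t1R) (hf2 : f t2L = f t2R) :
    t2L + t2R < t1L + t1R := by
  have hL : t1L ∈ Ioo 0 (2 * π) := ⟨h1, by linarith⟩
  have hR : t1R ∈ Ioo 0 (2 * π) := ⟨by linarith, h6⟩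
  have hmono : MonotoneOn f (Icc t1L t2L) :=
    (strictMonoOn_f_of_critical hθc.2 hcrit).monotoneOn.mono (Icc_subset_Ioo h1 h3)
  exact add_lt_add_of_strictConvexOn_deriv (fun x hx ↦ differentiableAt_f hx)
    strictConvexOn_deriv_f hL hR (h3.trans h4) h5 hmono hf1 hf2
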